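/- arXiv:math/0312001 — 2 statements merged into one kernel-verified Lean document; each statement's English description precedes it below -/
import Mathlib

section
/- Riesz-type sequence: for any normed space V over ℝ or ℂ there is a sequence p₁, p₂, … in the unit sphere of V, of length dim V if V is finite-dimensional and of infinite length otherwise, such that for every m, ‖p_m − q‖ ≥ 1 for all q in the linear span of {p₁, …, p_{m−1}}. -/
/-!
Over `ℝ` or `ℂ` every positive norm value can be rescaled to `1`, and in a finite-dimensional
subspace `F` a best approximation `y` to a given `x ∉ F` exists by properness. The normalized
residual `(x - y) / ‖x - y‖` is therefore a unit vector at distance at least `1` from `F`: unlike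
in Riesz's lemma for closed subspaces, the constant `1` is attained. Choosing each term greedily
against the span of its predecessors gives the sequence.
-/

open Cardinal Set

section GreedySequence

variable {ι α : Type*} [Preorder ι] [WellFoundedLT ι]

theorem exists_forall_eq_apply_image_Iio (f : Set α → α) :
    ∃ p : ι → α, ∀ i, p i = f (p '' Iio i) := by
  refine ⟨wellFounded_lt.fix fun i prev => f (range fun j : Iio i => prev j j.2), fun i => ?_⟩
  rw [WellFounded.fix_eq, image_eq_range]

theorem exists_forall_rel_image_Iio_of_exists [Nonempty α] (R : Set α → α → Prop) :
    ∃ p : ι → α, ∀ i, (∃ a, R (p '' Iio i) a) → R (p '' Iio i) (p i) := by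
  obtain ⟨p, hp⟩ := exists_forall_eq_apply_image_Iio (ι := ι) fun s => Classical.epsilon (R s)
  refine ⟨p, fun i hi => ?_⟩
  rw [hp i]
  exact Classical.epsilon_spec hi

end GreedySequence

section Rank

variable {R M : Type*} [Semiring R] [StrongRankCondition R] [AddCommMonoid M] [Module R M]

theorem span_ne_top_of_mk_lt_rank {s : Set M} (hs : #s < Module.rank R M) :
    Submodule.span R s ≠ ⊤ := by
  intro htop
  have hle : Module.rank R (Submodule.span R s) ≤ #s := rank_span_le s
  rw [htop, rank_top] at hle
  exact hs.not_ge hle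

theorem natCast_lt_rank_iff [Module.Free R M] {n : ℕ} :
    (n : Cardinal) < Module.rank R M ↔ ¬ Module.Finite R M ∨ n < Module.finrank R M := by
  by_cases hfin : Module.Finite R M
  · simp only [hfin, not_true_eq_false, false_or, ← Module.finrank_eq_rank, Nat.cast_lt]
  · have hinf : ℵ₀ ≤ Module.rank R M := not_lt.1 (mt Module.rank_lt_aleph0_iff.1 hfin)
    exact iff_of_true (natCast_lt_aleph0.trans_le hinf) (Or.inl hfin)

end Rank

theorem exists_mem_forall_dist_le {X : Type*} [PseudoMetricSpace X] {s : Set X} [ProperSpace s]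
    (hs : s.Nonempty) (x : X) : ∃ y ∈ s, ∀ z ∈ s, dist x y ≤ dist x z := by
  obtain ⟨a, ha⟩ := hs
  have : Nonempty s := ⟨⟨a, ha⟩⟩
  have hlim : Filter.Tendsto (fun z : s => dist x z) (Filter.cocompact s) Filter.atTop := by
    refine Filter.tendsto_atTop_mono (fun z => ?_) (Filter.tendsto_atTop_add_const_right _
      (-dist x a) (tendsto_dist_left_cocompact_atTop (⟨a, ha⟩ : s)))
    have htri : dist a (z : X) ≤ dist x a + dist x z := dist_triangle_left a z x
    rw [Subtype.dist_eq]
    linarith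
  obtain ⟨y, hy⟩ := Continuous.exists_forall_le (by fun_prop) hlim
  exact ⟨y, y.2, fun z hz => hy ⟨z, hz⟩⟩

theorem norm_smul_le_norm_smul_sub {𝕜 V : Type*} [NormedDivisionRing 𝕜]
    [SeminormedAddCommGroup V] [Module 𝕜 V] [NormSMulClass 𝕜 V] {F : Submodule 𝕜 V} {w : V}
    (hw : ∀ q ∈ F, ‖w‖ ≤ ‖w - q‖) (c : 𝕜) {q : V} (hq : q ∈ F) : ‖c • w‖ ≤ ‖c • w - q‖ := by
  rcases eq_or_ne c 0 with rfl | hc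
  · simp
  calc
    ‖c • w‖ = ‖c‖ * ‖w‖ := norm_smul c w
    _ ≤ ‖c‖ * ‖w - c⁻¹ • q‖ := by gcongr; exact hw _ (F.smul_mem _ hq)
    _ = ‖c • w - q‖ := by rw [← norm_smul, smul_sub, smul_inv_smul₀ hc]

theorem exists_norm_eq_one_forall_one_le_norm_sub {𝕜 V : Type*} [RCLike 𝕜]
    [NormedAddCommGroup V] [NormedSpace 𝕜 V] {F : Submodule 𝕜 V} [ProperSpace F] (hF : F ≠ ⊤) :
    ∃ u : V, ‖u‖ = 1 ∧ ∀ q ∈ F, 1 ≤ ‖u - q‖ := by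
  obtain ⟨x, -, hx⟩ := SetLike.exists_of_lt hF.lt_top
  obtain ⟨y, hyF, hy⟩ := exists_mem_forall_dist_le (s := (F : Set V)) F.nonempty x
  have hne : x - y ≠ 0 := sub_ne_zero.2 fun h => hx (h ▸ hyF)
  have hmin : ∀ q ∈ F, ‖x - y‖ ≤ ‖x - y - q‖ := fun q hq => by
    simpa only [dist_eq_norm, sub_sub] using hy (y + q) (F.add_mem hyF hq)
  have hunit : ‖(‖x - y‖⁻¹ : 𝕜) • (x - y)‖ = 1 := norm_smul_inv_norm hne
  exact ⟨_, hunit, fun q hq => hunit.ge.trans (norm_smul_le_norm_smul_sub hmin _ hq)⟩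

/-- Riesz-type sequence: for any normed space `V` over `𝕜 = ℝ` or `ℂ`
there is a sequence `p₀, p₁, …` in the unit sphere of `V`, of length `dim V` when `V`
is finite-dimensional and infinite otherwise, such that `‖p m − q‖ ≥ 1` for every `m`
and every `q` in the span of the previous terms. -/
theorem exists_riesz_sequence {𝕜 : Type} [RCLike 𝕜] (V : Type*)
    [NormedAddCommGroup V] [NormedSpace 𝕜 V] :
    ∃ p : ℕ → V, ∀ m : ℕ,
      (¬ FiniteDimensional 𝕜 V ∨ m < Module.finrank 𝕜 V) →
        ‖p m‖ = 1 ∧ ∀ q ∈ Submodule.span 𝕜 (p '' Set.Iio m), 1 ≤ ‖p m - q‖ := by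
  obtain ⟨p, hp⟩ := exists_forall_rel_image_Iio_of_exists (ι := ℕ) fun (s : Set V) u =>
    ‖u‖ = 1 ∧ ∀ q ∈ Submodule.span 𝕜 s, 1 ≤ ‖u - q‖
  refine ⟨p, fun m hm => hp m ?_⟩
  have hcard : #(p '' Iio m) ≤ m := by
    simpa using mk_image_le_lift (f := p) (s := Iio m)
  have hspan : Submodule.span 𝕜 (p '' Iio m) ≠ ⊤ :=
    span_ne_top_of_mk_lt_rank (hcard.trans_lt (natCast_lt_rank_iff.2 hm))
  have : FiniteDimensional 𝕜 (Submodule.span 𝕜 (p '' Iio m)) :=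
    .span_of_finite 𝕜 ((finite_Iio m).image p)
  have : ProperSpace (Submodule.span 𝕜 (p '' Iio m)) := FiniteDimensional.proper 𝕜 _
  exact exists_norm_eq_one_forall_one_le_norm_sub hspan
end

section
/- Subtrivialization at a point: let ({A_t}, Γ) be a continuous field of Banach spaces over a locally compact Hausdorff space T, and let t₀ ∈ T be such that A_{t₀} is separable. Then there exist a normed space V and linear isometric embeddings h_t : A_t → V for every t ∈ T, such that for every continuous section f ∈ Γ the V-valued map t ↦ h_t(f_t) is continuous at t₀. -/
universe u

/-!
Each `A t` is embedded into a single `ℓ^∞(Φ)`, where `Φ` consists of families `(ψ, (φ t))` of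
functionals of norm at most one on `A t₀` and on the `A t`. A countable set of sections with dense
values at `t₀` parametrizes each fibre by a linear map `G t` from a space `E` of countable
dimension. The seminorms `c ↦ ‖G t c‖` converge pointwise as `t → t₀`, hence uniformly on bounded
subsets of finite-dimensional subspaces; a diagonal choice turns this into seminorms `p t ≥
|‖G t ·‖ - ‖G t₀ ·‖|` which converge pointwise to zero. Requiring `|φ t ∘ G t - ψ ∘ G t₀| ≤ p t` of
the members of `Φ` makes the embeddings continuous at `t₀`, and by Hahn–Banach enough such families
exist for the embeddings to be isometric.
-/

open Filter Topology
open scoped ENNReal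

universe v w

section Amalgamation

variable {E X Y : Type*} [AddCommGroup E] [Module ℝ E]
  [SeminormedAddCommGroup X] [NormedSpace ℝ X] [SeminormedAddCommGroup Y] [NormedSpace ℝ Y]

theorem exists_strongDual_abs_sub_le_seminorm (F : E →ₗ[ℝ] X) (G : E →ₗ[ℝ] Y) (p : Seminorm ℝ E)
    (hGF : ∀ c, ‖G c‖ ≤ ‖F c‖ + p c) {ψ : StrongDual ℝ Y} (hψ : ‖ψ‖ ≤ 1) :
    ∃ φ : StrongDual ℝ X, ‖φ‖ ≤ 1 ∧ ∀ c, |φ (F c) - ψ (G c)| ≤ p c := by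
  -- Extend `(c, F c) ↦ ψ (G c)` from the graph of `F` to `E × X`, dominated by `p c + ‖x‖`.
  obtain ⟨g, hg_graph, hg_le⟩ := exists_extension_of_le_sublinear
    ((ψ.toLinearMap ∘ₗ G ∘ₗ LinearMap.fst ℝ E X).toPMap F.graph) (fun x => p x.1 + ‖x.2‖)
    (fun r hr x => by
      simp only [Prod.smul_fst, Prod.smul_snd, map_smul_eq_mul, norm_smul, Real.norm_eq_abs,
        abs_of_pos hr, mul_add])
    (fun x y => by
      simp only [Prod.fst_add, Prod.snd_add]
      linarith [map_add_le_add p x.1 y.1, norm_add_le x.2 y.2])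
    (by
      rintro ⟨⟨c, a⟩, hca⟩
      obtain rfl : a = F c := (LinearMap.mem_graph_iff _ _).1 hca
      calc ψ (G c) ≤ ‖ψ (G c)‖ := le_abs_self _
        _ ≤ ‖G c‖ := ψ.le_of_opNorm_le_of_le hψ le_rfl |>.trans_eq (one_mul _)
        _ ≤ p c + ‖F c‖ := (hGF c).trans_eq (add_comm _ _))
  have hg_snd (a : X) : |g (0, a)| ≤ 1 * ‖a‖ := by
    have h_neg : -g (0, a) = g (0, -a) := by rw [← map_neg, Prod.neg_mk, neg_zero]
    rw [one_mul]
    refine abs_le'.2 ⟨by simpa using hg_le (0, a), ?_⟩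
    rw [h_neg]
    simpa using hg_le (0, -a)
  have hg_fst (c : E) : |g (c, 0)| ≤ p c := by
    have h_neg : -g (c, 0) = g (-c, 0) := by rw [← map_neg, Prod.neg_mk, neg_zero]
    refine abs_le'.2 ⟨by simpa using hg_le (c, 0), ?_⟩
    rw [h_neg]
    simpa using hg_le (-c, 0)
  refine ⟨(g ∘ₗ LinearMap.inr ℝ E X).mkContinuous 1 hg_snd,
    LinearMap.mkContinuous_norm_le _ zero_le_one _, fun c => ?_⟩
  have hψG : ψ (G c) = g (c, 0) + g (0, F c) := by
    rw [← map_add, Prod.mk_add_mk, add_zero, zero_add]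
    exact (hg_graph ⟨(c, F c), rfl⟩).symm
  calc |g (0, F c) - ψ (G c)| = |g (c, 0)| := by rw [hψG, abs_sub_comm, add_sub_cancel_right]
    _ ≤ p c := hg_fst c

/-- The embedding of a seminormed space into `ℓ^∞(Φ)` by evaluation of a norming family of
functionals indexed by `Φ`. -/
noncomputable def normingEmbedding {Φ : Type*} (u : Φ → StrongDual ℝ X) (hu : ∀ φ, ‖u φ‖ ≤ 1)
    (hu_norming : ∀ x, ∃ φ, u φ x = ‖x‖) : X →ₗᵢ[ℝ] lp (fun _ : Φ => ℝ) ∞ :=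
  have hu_le (x : X) (φ : Φ) : ‖u φ x‖ ≤ ‖x‖ :=
    ((u φ).le_of_opNorm_le (hu φ) x).trans_eq (one_mul _)
  let L : X →ₗ[ℝ] lp (fun _ : Φ => ℝ) ∞ :=
    { toFun := fun x => ⟨fun φ => u φ x, memℓp_infty ⟨‖x‖, Set.forall_mem_range.2 (hu_le x)⟩⟩
      map_add' := fun x y => by ext φ; exact map_add (u φ) x y
      map_smul' := fun r x => by ext φ; exact map_smul (u φ) r x }
  { L with
    norm_map' := fun x => by
      refine le_antisymm (lp.norm_le_of_forall_le (norm_nonneg x) (hu_le x)) ?_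
      obtain ⟨φ, hφ⟩ := hu_norming x
      calc ‖x‖ ≤ ‖u φ x‖ := hφ.ge.trans (le_abs_self _)
        _ ≤ ‖L x‖ := lp.norm_apply_le_norm ENNReal.top_ne_zero (L x) φ }

variable {ι : Type*} {A : ι → Type*} [∀ i, SeminormedAddCommGroup (A i)]
  [∀ i, NormedSpace ℝ (A i)]

/-- The families of functionals of norm at most one, on `Y` and on each `A i`, whose pullbacks
along `G₀` and `G i` differ by at most `p i`. They are the points of the set `Φ` for which the
amalgam of `Y` and the `A i` is realized inside `ℓ^∞(Φ)`. -/
def compatibleDuals (G₀ : E →ₗ[ℝ] Y) (G : ∀ i, E →ₗ[ℝ] A i) (p : ι → Seminorm ℝ E) :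
    Set (StrongDual ℝ Y × ∀ i, StrongDual ℝ (A i)) :=
  {x | ‖x.1‖ ≤ 1 ∧ ∀ i, ‖x.2 i‖ ≤ 1 ∧ ∀ c, |x.2 i (G i c) - x.1 (G₀ c)| ≤ p i c}

variable {G₀ : E →ₗ[ℝ] Y} {G : ∀ i, E →ₗ[ℝ] A i} {p : ι → Seminorm ℝ E}

theorem exists_mem_compatibleDuals_fst (hp : ∀ i c, |‖G i c‖ - ‖G₀ c‖| ≤ p i c)
    {ψ : StrongDual ℝ Y} (hψ : ‖ψ‖ ≤ 1) : ∃ x ∈ compatibleDuals G₀ G p, x.1 = ψ := by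
  choose φ hφ using fun i => exists_strongDual_abs_sub_le_seminorm (G i) G₀ (p i)
    (fun c => by linarith [(abs_le.1 (hp i c)).1]) hψ
  exact ⟨(ψ, φ), ⟨hψ, hφ⟩, rfl⟩

theorem exists_mem_compatibleDuals_snd (hp : ∀ i c, |‖G i c‖ - ‖G₀ c‖| ≤ p i c) (i : ι)
    {φ : StrongDual ℝ (A i)} (hφ : ‖φ‖ ≤ 1) : ∃ x ∈ compatibleDuals G₀ G p, x.2 i = φ := by
  classical
  obtain ⟨ψ, hψ, hψφ⟩ := exists_strongDual_abs_sub_le_seminorm G₀ (G i) (p i)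
    (fun c => by linarith [(abs_le.1 (hp i c)).2]) hφ
  obtain ⟨x, ⟨-, hx⟩, rfl⟩ := exists_mem_compatibleDuals_fst hp hψ
  refine ⟨(x.1, Function.update x.2 i φ), ⟨hψ, fun j => ?_⟩,
    Function.update_self (f := x.2) i φ⟩
  obtain rfl | hj := eq_or_ne j i
  · simp only [Function.update_self]
    exact ⟨hφ, fun c => abs_sub_comm (φ _) _ ▸ hψφ c⟩
  · simpa only [Function.update_of_ne hj] using hx j

end Amalgamation

theorem exists_linearIsometry_norm_sub_le_seminorm {E : Type*} [AddCommGroup E] [Module ℝ E]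
    {ι : Type u} {Y : Type v} {A : ι → Type w} [SeminormedAddCommGroup Y] [NormedSpace ℝ Y]
    [∀ i, SeminormedAddCommGroup (A i)] [∀ i, NormedSpace ℝ (A i)]
    (G₀ : E →ₗ[ℝ] Y) (G : ∀ i, E →ₗ[ℝ] A i) (p : ι → Seminorm ℝ E)
    (hp : ∀ i c, |‖G i c‖ - ‖G₀ c‖| ≤ p i c) :
    ∃ (V : Type (max u v w)) (_ : NormedAddCommGroup V) (_ : NormedSpace ℝ V)
      (h₀ : Y →ₗᵢ[ℝ] V) (h : ∀ i, A i →ₗᵢ[ℝ] V), ∀ i c, ‖h i (G i c) - h₀ (G₀ c)‖ ≤ p i c := by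
  let Φ := compatibleDuals G₀ G p
  refine ⟨lp (fun _ : Φ => ℝ) ∞, inferInstance, inferInstance,
    normingEmbedding (fun x : Φ => x.1.1) (fun x => x.2.1) fun a => ?_,
    fun i => normingEmbedding (fun x : Φ => x.1.2 i) (fun x => (x.2.2 i).1) fun a => ?_,
    fun i c => lp.norm_le_of_forall_le (apply_nonneg (p i) c) fun x => (x.2.2 i).2 c⟩
  · obtain ⟨ψ, hψ, hψa⟩ := exists_dual_vector'' ℝ a
    obtain ⟨x, hx, rfl⟩ := exists_mem_compatibleDuals_fst hp hψ
    exact ⟨⟨x, hx⟩, hψa⟩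
  · obtain ⟨φ, hφ, hφa⟩ := exists_dual_vector'' ℝ a
    obtain ⟨x, hx, rfl⟩ := exists_mem_compatibleDuals_snd hp i hφ
    exact ⟨⟨x, hx⟩, hφa⟩

theorem norm_linearIsometry_sub_le {X Y V : Type*} [SeminormedAddCommGroup X] [NormedSpace ℝ X]
    [SeminormedAddCommGroup Y] [NormedSpace ℝ Y] [SeminormedAddCommGroup V] [NormedSpace ℝ V]
    (h : X →ₗᵢ[ℝ] V) (k : Y →ₗᵢ[ℝ] V) (x x' : X) (y y' : Y) :
    ‖h x - k y‖ ≤ ‖x - x'‖ + ‖h x' - k y'‖ + ‖y - y'‖ :=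
  calc ‖h x - k y‖ = ‖h (x - x') + (h x' - k y') - k (y - y')‖ := by
        simp only [map_sub]
        abel_nf
    _ ≤ ‖h (x - x')‖ + ‖h x' - k y'‖ + ‖k (y - y')‖ :=
        (norm_sub_le _ _).trans (add_le_add_left (norm_add_le _ _) _)
    _ = ‖x - x'‖ + ‖h x' - k y'‖ + ‖y - y'‖ := by rw [h.norm_map, k.norm_map]

section SeminormConvergence

variable {T : Type*} {l : Filter T}

theorem seminorm_le_sum_abs_repr_mul {ι F : Type*} [Fintype ι] [AddCommGroup F] [Module ℝ F]
    (b : Module.Basis ι ℝ F) (q : Seminorm ℝ F) (x : F) :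
    q x ≤ ∑ i, |b.repr x i| * q (b i) :=
  calc q x = q (∑ i, b.repr x i • b i) := by rw [b.sum_repr]
    _ ≤ ∑ i, q (b.repr x i • b i) :=
      Finset.le_sum_of_subadditive q (map_zero q).le (map_add_le_add q) _ _
    _ = ∑ i, |b.repr x i| * q (b i) := by simp only [map_smul_eq_mul, Real.norm_eq_abs]

section FiniteDimensional

variable {F : Type*} [NormedAddCommGroup F] [NormedSpace ℝ F] [FiniteDimensional ℝ F]
  {q : T → Seminorm ℝ F} {q₀ : Seminorm ℝ F}

theorem tendsto_seminorm_prod_nhds (hq : ∀ x, Tendsto (fun t => q t x) l (𝓝 (q₀ x))) (y : F) :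
    Tendsto (fun z : T × F => q z.1 z.2) (l ×ˢ 𝓝 y) (𝓝 (q₀ y)) := by
  let b := Module.finBasis ℝ F
  have h_coord (i) : Tendsto (fun z : T × F => |b.repr (z.2 - y) i|) (l ×ˢ 𝓝 y) (𝓝 0) := by
    have h_cont : Continuous fun x => |b.repr (x - y) i| :=
      ((b.coord i).continuous_of_finiteDimensional.comp (continuous_id.sub continuous_const)).abs
    simpa [Function.comp_def] using (h_cont.tendsto y).comp tendsto_snd
  have h_diff : Tendsto (fun z : T × F => ∑ i, |b.repr (z.2 - y) i| * q z.1 (b i))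
      (l ×ˢ 𝓝 y) (𝓝 0) := by
    simpa using tendsto_finsetSum Finset.univ fun i _ =>
      (h_coord i).mul ((hq (b i)).comp tendsto_fst)
  have h_diff' : Tendsto (fun z : T × F => q z.1 z.2 - q z.1 y) (l ×ˢ 𝓝 y) (𝓝 0) :=
    squeeze_zero_norm (fun z => (abs_sub_map_le_sub (q z.1) z.2 y).trans
      (seminorm_le_sum_abs_repr_mul b (q z.1) (z.2 - y))) h_diff
  simpa using h_diff'.add ((hq y).comp tendsto_fst)

theorem eventually_abs_seminorm_sub_le_mul_norm
    (hq : ∀ x, Tendsto (fun t => q t x) l (𝓝 (q₀ x))) {ε : ℝ} (hε : 0 < ε) :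
    ∀ᶠ t in l, ∀ x, |q t x - q₀ x| ≤ ε * ‖x‖ := by
  have h_joint (y : F) : ∀ᶠ z in l ×ˢ 𝓝 y, |q z.1 z.2 - q₀ z.2| ≤ ε := by
    have h_sub := (tendsto_seminorm_prod_nhds hq y).sub
      (tendsto_seminorm_prod_nhds (l := l) (fun x => tendsto_const_nhds (x := q₀ x)) y)
    rw [sub_self] at h_sub
    exact (h_sub.abs.eventually_lt_const (by simpa using hε)).mono fun _ => le_of_lt
  have h_sphere : ∀ᶠ t in l, ∀ x ∈ Metric.sphere (0 : F) 1, |q t x - q₀ x| ≤ ε := by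
    have h_mem := (isCompact_sphere (0 : F) 1).mem_prod_nhdsSet_of_forall fun y _ => h_joint y
    exact (eventually_prod_iff.1 h_mem).elim fun P ⟨hP, Q, hQ, hPQ⟩ =>
      hP.mono fun t ht x hx => hPQ ht (hQ.self_of_nhdsSet x hx)
  filter_upwards [h_sphere] with t ht x
  obtain rfl | hx := eq_or_ne x 0
  · simp
  have hx_pos : 0 < ‖x‖ := norm_pos_iff.2 hx
  have h_unit := ht (‖x‖⁻¹ • x) (by simp [norm_smul, hx_pos.ne'])
  rwa [map_smul_eq_mul, map_smul_eq_mul, ← mul_sub, norm_inv, norm_norm, abs_mul, abs_inv,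
    abs_norm, inv_mul_le_iff₀ hx_pos, mul_comm] at h_unit

end FiniteDimensional

section Exhaustion

variable {E : Type*} [AddCommGroup E] [Module ℝ E] {π : ℕ → E →ₗ[ℝ] E} {σ : ℕ → Seminorm ℝ E}

theorem exists_seminorm_abs_sub_le_of_exhaustion (hπ : ∀ c, ∀ᶠ n in atTop, π n c = c)
    (hπ₀ : π 0 = 0) (hσ : ∀ c, Tendsto (fun n => σ n c) atTop (𝓝 0)) (q q₀ : Seminorm ℝ E) :
    ∃ p : Seminorm ℝ E, (∀ c, |q c - q₀ c| ≤ p c) ∧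
      ∀ n, (∀ c, |q (π n c) - q₀ (π n c)| ≤ σ n c) →
        ∀ c r, (∀ m ≥ n, π m c = c ∧ σ m c ≤ r) → p c ≤ r := by
  classical
  let P : ℕ → Prop := fun n => ∀ c, |q (π n c) - q₀ (π n c)| ≤ σ n c
  obtain h_eq | ⟨d, hd⟩ := forall_or_exists_not fun c => q c = q₀ c
  · exact ⟨0, fun c => by simp [h_eq c], fun n _ c r hr =>
      (apply_nonneg (σ n) c).trans (hr n le_rfl).2⟩
  obtain ⟨K, hPK⟩ : ∃ K, ∀ n, P n → n ≤ K := by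
    have h_fail : ∀ᶠ n in atTop, ¬ P n := by
      filter_upwards [hπ d, (hσ d).eventually_lt_const (abs_pos.2 (sub_ne_zero.2 hd))]
        with n hn hσn hPn
      exact hσn.not_ge (by simpa only [hn] using hPn d)
    obtain ⟨K, hK⟩ := eventually_atTop.1 h_fail
    exact ⟨K, fun n hPn => le_of_not_ge fun hn => hK n hn hPn⟩
  let N := Nat.findGreatest P K
  have hPN : P N := Nat.findGreatest_spec K.zero_le fun c => by simp [hπ₀]
  refine ⟨σ N + (q + q₀).comp (LinearMap.id - π N), fun c => ?_, fun n hPn c r hr => ?_⟩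
  · calc |q c - q₀ c|
        = |(q (π N c) - q₀ (π N c)) + (q c - q (π N c)) - (q₀ c - q₀ (π N c))| := by ring_nf
      _ ≤ |q (π N c) - q₀ (π N c)| + |q c - q (π N c)| + |q₀ c - q₀ (π N c)| :=
        (abs_sub _ _).trans (add_le_add_left (abs_add_le _ _) _)
      _ ≤ σ N c + q (c - π N c) + q₀ (c - π N c) :=
        add_le_add_three (hPN c) (abs_sub_map_le_sub q _ _) (abs_sub_map_le_sub q₀ _ _)
      _ = _ := add_assoc _ _ _
  · obtain ⟨hπc, hσc⟩ := hr N (Nat.le_findGreatest (hPK n hPn) hPn)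
    simpa [hπc] using hσc

theorem exists_seminorm_tendsto_zero_of_exhaustion (hπ : ∀ c, ∀ᶠ n in atTop, π n c = c)
    (hπ₀ : π 0 = 0) (hσ : ∀ c, Tendsto (fun n => σ n c) atTop (𝓝 0))
    {q : T → Seminorm ℝ E} {q₀ : Seminorm ℝ E}
    (hq : ∀ n, ∀ᶠ t in l, ∀ c, |q t (π n c) - q₀ (π n c)| ≤ σ n c) :
    ∃ p : T → Seminorm ℝ E, (∀ t c, |q t c - q₀ c| ≤ p t c) ∧
      ∀ c, Tendsto (fun t => p t c) l (𝓝 0) := by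
  choose p hqp hp using fun t => exists_seminorm_abs_sub_le_of_exhaustion hπ hπ₀ hσ (q t) q₀
  refine ⟨p, hqp, fun c => Metric.tendsto_nhds.2 fun ε hε => ?_⟩
  obtain ⟨n, hn⟩ := eventually_atTop.1
    ((hπ c).and ((hσ c).eventually_le_const (half_pos hε)))
  filter_upwards [hq n] with t ht
  rw [Real.dist_0_eq_abs, abs_of_nonneg (apply_nonneg _ _)]
  exact (hp t n ht c _ hn).trans_lt (half_lt_self hε)

theorem exists_seminorm_tendsto_zero_of_basis_nat (b : Module.Basis ℕ ℝ E)
    {q : T → Seminorm ℝ E} {q₀ : Seminorm ℝ E}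
    (hq : ∀ c, Tendsto (fun t => q t c) l (𝓝 (q₀ c))) :
    ∃ p : T → Seminorm ℝ E, (∀ t c, |q t c - q₀ c| ≤ p t c) ∧
      ∀ c, Tendsto (fun t => p t c) l (𝓝 0) := by
  let ρ (n : ℕ) : E →ₗ[ℝ] Fin n → ℝ := LinearMap.pi fun i => b.coord i
  let incl (n : ℕ) : (Fin n → ℝ) →ₗ[ℝ] E := Fintype.linearCombination ℝ fun i => b i
  let σ (n : ℕ) : Seminorm ℝ E :=
    (1 / ((n : NNReal) + 1)) • (normSeminorm ℝ (Fin n → ℝ)).comp (ρ n)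
  have h_proj (n : ℕ) (c : E) : incl n (ρ n c) = ∑ i ∈ Finset.range n, b.repr c i • b i := by
    simp [incl, ρ, Fintype.linearCombination_apply, Finset.sum_range]
  refine exists_seminorm_tendsto_zero_of_exhaustion (π := fun n => incl n ∘ₗ ρ n) (σ := σ)
    (fun c => ?_) ?_ (fun c => ?_) fun n => ?_
  · obtain ⟨N, hN⟩ := (b.repr c).support.exists_nat_subset_range
    filter_upwards [eventually_ge_atTop N] with n hn
    have h_supp : (b.repr c).support ⊆ Finset.range n :=
      hN.trans (Finset.range_subset_range.2 hn)
    rw [LinearMap.comp_apply, h_proj,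
      ← Finsupp.sum_of_support_subset (b.repr c) h_supp (fun i r => r • b i) (by simp)]
    exact b.linearCombination_repr c
  · ext c
    simp [h_proj]
  · obtain ⟨M, hM⟩ := ((b.repr c).finite_range.image abs).bddAbove
    have hρ (n : ℕ) : ‖ρ n c‖ ≤ |M| :=
      (pi_norm_le_iff_of_nonneg (abs_nonneg M)).2 fun i =>
        (hM (Set.mem_image_of_mem abs (Set.mem_range_self _))).trans (le_abs_self M)
    refine squeeze_zero (fun n => apply_nonneg (σ n) c)
      (fun n => mul_le_mul_of_nonneg_left (hρ n) (by positivity)) ?_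
    simpa using tendsto_one_div_add_atTop_nhds_zero_nat.mul_const |M|
  · have h_fin := eventually_abs_seminorm_sub_le_mul_norm (q := fun t => (q t).comp (incl n))
      (q₀ := q₀.comp (incl n)) (fun x => hq (incl n x)) (Nat.one_div_pos_of_nat (n := n))
    exact h_fin.mono fun t ht c => ht (ρ n c)

end Exhaustion

end SeminormConvergence

theorem exists_seq_denseRange_comp {X Y : Type*} [Nonempty X] [PseudoMetricSpace Y]
    [TopologicalSpace.SeparableSpace Y] {f : X → Y} (hf : DenseRange f) :
    ∃ x : ℕ → X, DenseRange (f ∘ x) := by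
  have : SecondCountableTopology Y := UniformSpace.secondCountable_of_separable Y
  obtain ⟨y, hy⟩ := TopologicalSpace.exists_dense_seq (Set.range f)
  choose x hx using fun n => (y n).2
  refine ⟨x, ?_⟩
  have h_comp : f ∘ x = Subtype.val ∘ y := funext hx
  rw [h_comp]
  have h_val : DenseRange (Subtype.val : Set.range f → Y) := by
    rwa [DenseRange, Subtype.range_val]
  exact h_val.comp hy continuous_subtype_val

theorem subtrivialization_at_point_general {T : Type u} [TopologicalSpace T] {A : T → Type v}
    [∀ t, SeminormedAddCommGroup (A t)] [∀ t, NormedSpace ℝ (A t)]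
    (Γ : Submodule ℝ (∀ t, A t)) (t₀ : T) [TopologicalSpace.SeparableSpace (A t₀)]
    (hnorm : ∀ f ∈ Γ, ContinuousAt (fun t => ‖f t‖) t₀)
    (hdense : ∀ (a : A t₀) (ε : ℝ), 0 < ε → ∃ f ∈ Γ, ‖f t₀ - a‖ < ε) :
    ∃ (V : Type (max u v)) (_ : NormedAddCommGroup V) (_ : NormedSpace ℝ V)
      (h : ∀ t, A t →ₗᵢ[ℝ] V), ∀ f ∈ Γ, ContinuousAt (fun t => h t (f t)) t₀ := by
  have h_eval : DenseRange fun f : Γ => f.1 t₀ := Metric.denseRange_iff.2 fun a ε hε => by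
    simpa [dist_eq_norm, norm_sub_rev a] using hdense a ε hε
  obtain ⟨g, hg⟩ := exists_seq_denseRange_comp h_eval
  let S : (ℕ →₀ ℝ) →ₗ[ℝ] Γ := Finsupp.linearCombination ℝ g
  let G (t : T) : (ℕ →₀ ℝ) →ₗ[ℝ] A t := LinearMap.proj t ∘ₗ Γ.subtype ∘ₗ S
  obtain ⟨p, hGp, hp⟩ := exists_seminorm_tendsto_zero_of_basis_nat Finsupp.basisSingleOne
    (q := fun t => (normSeminorm ℝ (A t)).comp (G t)) (q₀ := (normSeminorm ℝ (A t₀)).comp (G t₀))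
    fun c => hnorm _ (S c).2
  obtain ⟨V, _, _, h₀, h, hh⟩ := exists_linearIsometry_norm_sub_le_seminorm (G t₀) G p hGp
  refine ⟨V, inferInstance, inferInstance, h, fun f hf => ?_⟩
  refine continuousAt_of_tendsto_nhds (y := h₀ (f t₀)) (Metric.tendsto_nhds.2 fun ε hε => ?_)
  obtain ⟨n, hn⟩ := hg.exists_dist_lt (f t₀) (half_pos hε)
  let c : ℕ →₀ ℝ := Finsupp.single n 1
  have hGc (t : T) : G t c = (g n).1 t := by simp [G, S, c]
  have h_bound (t : T) : ‖h t (f t) - h₀ (f t₀)‖ ≤ ‖f t - G t c‖ + p t c + ‖f t₀ - G t₀ c‖ :=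
    (norm_linearIsometry_sub_le (h t) h₀ (f t) (G t c) (f t₀) (G t₀ c)).trans
      (by gcongr; exact hh t c)
  have h_lim : Tendsto (fun t => ‖f t - G t c‖ + p t c + ‖f t₀ - G t₀ c‖) (𝓝 t₀)
      (𝓝 (‖f t₀ - G t₀ c‖ + 0 + ‖f t₀ - G t₀ c‖)) :=
    ((hnorm _ (Γ.sub_mem hf (S c).2)).tendsto.add (hp c)).add_const _
  have h_small : ‖f t₀ - G t₀ c‖ < ε / 2 := by
    rwa [hGc, ← dist_eq_norm]
  filter_upwards [h_lim.eventually_lt_const (by linarith : _ < ε)] with t ht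
  exact (dist_eq_norm _ _).trans_lt ((h_bound t).trans_lt ht)

/-- The sections of a continuous field as a real vector space, where only multiplication by the
constants of `C(T)` is retained. -/
def sectionSubmodule {T : Type*} {A : T → Type*} [∀ t, AddCommGroup (A t)]
    [∀ t, Module ℝ (A t)] (Γ : Set (∀ t, A t)) (hne : Γ.Nonempty)
    (hadd : ∀ f ∈ Γ, ∀ g ∈ Γ, (fun t => f t + g t) ∈ Γ)
    (hsmul : ∀ f ∈ Γ, ∀ r : ℝ, (fun t => r • f t) ∈ Γ) : Submodule ℝ (∀ t, A t) where
  carrier := Γ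
  add_mem' hf hg := hadd _ hf _ hg
  zero_mem' := by
    obtain ⟨f, hf⟩ := hne
    have h_zero : (fun t => (0 : ℝ) • f t) = 0 := funext fun t => zero_smul ℝ (f t)
    exact h_zero ▸ hsmul f hf 0
  smul_mem' r f hf := hsmul f hf r

/-- subtrivialization at a point: let `({A_t}, Γ)` be a continuous
field of Banach spaces over a locally compact Hausdorff space `T` (sections have
continuous norm, `Γ` is a `C(T)`-module closed under addition, fiberwise dense, and
locally uniformly closed), and let `t₀ ∈ T` with `A_{t₀}` separable. Then there are
a normed space `V` and linear isometric embeddings `h_t : A_t → V` such that for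
every `f ∈ Γ` the map `t ↦ h_t (f t)` is continuous at `t₀`. -/
theorem subtrivialization_at_point {T : Type u} [TopologicalSpace T]
    [LocallyCompactSpace T] [T2Space T]
    (A : T → Type u) [∀ t, NormedAddCommGroup (A t)] [∀ t, NormedSpace ℝ (A t)]
    [∀ t, CompleteSpace (A t)]
    (Γ : Set (∀ t, A t))
    (hnorm : ∀ f ∈ Γ, Continuous fun t => ‖f t‖)
    (hadd : ∀ f ∈ Γ, ∀ g ∈ Γ, (fun t => f t + g t) ∈ Γ)
    (hsmul : ∀ f ∈ Γ, ∀ φ : T → ℝ, Continuous φ → (fun t => φ t • f t) ∈ Γ)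
    (hdense : ∀ (t : T) (a : A t) (ε : ℝ), 0 < ε → ∃ f ∈ Γ, ‖f t - a‖ < ε)
    (hloc : ∀ g : ∀ t, A t,
      (∀ (t : T) (ε : ℝ), 0 < ε → ∃ U ∈ nhds t, ∃ f ∈ Γ, ∀ t' ∈ U, ‖g t' - f t'‖ ≤ ε) →
      g ∈ Γ)
    (t₀ : T) [TopologicalSpace.SeparableSpace (A t₀)] :
    ∃ (V : Type u) (_ : NormedAddCommGroup V) (_ : NormedSpace ℝ V)
      (h : ∀ t, A t →ₗᵢ[ℝ] V),
      ∀ f ∈ Γ, ContinuousAt (fun t => h t (f t)) t₀ := by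
  exact subtrivialization_at_point_general
    (sectionSubmodule Γ ((hdense t₀ 0 1 one_pos).imp fun _ hf => hf.1) hadd
      fun f hf r => hsmul f hf _ continuous_const)
    t₀ (fun f hf => (hnorm f hf).continuousAt) (hdense t₀)
end
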